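/- arXiv:2002.01916 — 3 statements merged into one kernel-verified Lean document; each statement's English description precedes it below -/
import Mathlib

section
/- Let x, y ∈ ℝ^n and w ∈ ℝ satisfy: x^{[j]} ≤ y^{[j]} for every j = 1,…,n; w ≤ x_i for every i; and w ≤ y_i for every i. Let x' be obtained from x by replacing one entry achieving the maximum of x with the value w. Let y' be either equal to y, or obtained from y by replacing exactly one entry of y with some value v with v ≥ w. Then x'^{[j]} ≤ y'^{[j]} for every j = 1,…,n. -/
/-- `nthLargest x j` is the `j`-th largest entry of `x : Fin n → ℝ` (0-indexed),
so `nthLargest x 0` is the maximum entry and `nthLargest x (n-1)` is the minimum: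
it is the `j`-th component of the rearrangement of `x` sorted in decreasing order. -/
noncomputable def nthLargest {n : ℕ} (x : Fin n → ℝ) (j : Fin n) : ℝ :=
  x (Tuple.sort x j.rev)

/-!
The `j`-th largest entry of `x` is at least `c` iff more than `j` entries of `x` are at least `c`.
So sorted dominance of `x` by `y` says that, for every level `c`, at most as many entries of `x` as
of `y` reach `c`. At a level `c ≤ w` every entry of the new dominating vector counts. At any other
level, lowering a maximal entry of `x` to `w` reduces a nonzero count by one, and changing one entry
of `y` reduces its count by at most one.
-/

open Finset Function

section EntryCounts

variable {ι α : Type*} [Fintype ι] [DecidableEq ι]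

theorem card_filter_update_of_imp (p : α → Prop) [DecidablePred p] {x : ι → α} {i₀ : ι} {w : α}
    (hx : ∀ i, p (x i) → p (x i₀)) (hw : ¬ p w) :
    #{i | p (update x i₀ w i)} = #{i | p (x i)} - 1 := by
  have herase : ({i | p (update x i₀ w i)} : Finset ι) = ({i | p (x i)} : Finset ι).erase i₀ := by
    ext i
    obtain rfl | hi := eq_or_ne i i₀ <;> simp [*]
  rw [herase]
  by_cases hi₀ : p (x i₀)
  · exact card_erase_of_mem (by simpa using hi₀)
  · have hempty : ({i | p (x i)} : Finset ι) = ∅ :=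
      filter_eq_empty_iff.2 fun i _ hi => hi₀ (hx i hi)
    simp [hempty]

theorem card_filter_sub_one_le_card_filter_update (p : α → Prop) [DecidablePred p]
    (y : ι → α) (k : ι) (v : α) :
    #{i | p (y i)} - 1 ≤ #{i | p (update y k v i)} := by
  have hsub : ({i | p (y i)} : Finset ι).erase k ⊆
      ({i | p (update y k v i)} : Finset ι) := by
    intro i hi
    obtain ⟨hik, hpi⟩ : i ≠ k ∧ p (y i) := by simpa using hi
    simpa [hik] using hpi
  exact pred_card_le_card_erase.trans (card_le_card hsub)

theorem card_filter_le_update_le [Preorder α] [DecidableLE α] {x y : ι → α} {i₀ : ι} {w v : α}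
    (hcount : ∀ c, #{i | c ≤ x i} ≤ #{i | c ≤ y i}) (hwy : ∀ i, w ≤ y i)
    (hmax : ∀ i, x i ≤ x i₀) (k : ι) (hwv : w ≤ v) (c : α) :
    #{i | c ≤ update x i₀ w i} ≤ #{i | c ≤ update y k v i} := by
  by_cases hcw : c ≤ w
  · have hwy' : ∀ i, w ≤ update y k v i :=
      (forall_update_iff y fun _ a => w ≤ a).2 ⟨hwv, fun i _ => hwy i⟩
    exact card_le_card fun i _ => by simpa using hcw.trans (hwy' i)
  · calc
      #{i | c ≤ update x i₀ w i} = #{i | c ≤ x i} - 1 :=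
        card_filter_update_of_imp (c ≤ ·) (fun i hi => hi.trans (hmax i)) hcw
      _ ≤ #{i | c ≤ y i} - 1 := Nat.sub_le_sub_right (hcount c) 1
      _ ≤ #{i | c ≤ update y k v i} := card_filter_sub_one_le_card_filter_update (c ≤ ·) y k v

end EntryCounts

/-- The decreasing rearrangement of the tuple `x`. It extends `nthLargest` from `ℝ` to an arbitrary
linear order, with the same indexing from `0`: for real `x` the two agree definitionally. -/
def antitoneSort {n : ℕ} {α : Type*} [LinearOrder α] (x : Fin n → α) : Fin n → α :=
  fun j => x (Tuple.sort x j.rev)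

section AntitoneSort

variable {n : ℕ} {α : Type*} [LinearOrder α]

theorem antitone_antitoneSort (x : Fin n → α) : Antitone (antitoneSort x) :=
  fun _ _ hij => Tuple.monotone_sort x (Fin.rev_le_rev.2 hij)

theorem card_filter_le_antitoneSort (x : Fin n → α) (c : α) :
    #{i | c ≤ antitoneSort x i} = #{i | c ≤ x i} := by
  refine card_equiv (Fin.revPerm.trans (Tuple.sort x)) fun i => ?_
  simp only [mem_filter_univ]
  rfl

theorem le_antitoneSort_iff_lt_card {x : Fin n → α} {j : Fin n} {c : α} :
    c ≤ antitoneSort x j ↔ j < #{i | c ≤ x i} := by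
  rw [← card_filter_le_antitoneSort,
    Tuple.lt_card_ge_iff_apply_ge_of_antitone (antitone_antitoneSort x)]

theorem antitoneSort_le_antitoneSort_iff {x y : Fin n → α} :
    antitoneSort x ≤ antitoneSort y ↔ ∀ c, #{i | c ≤ x i} ≤ #{i | c ≤ y i} := by
  constructor
  · intro h c
    rw [← card_filter_le_antitoneSort x, ← card_filter_le_antitoneSort y]
    exact card_le_card <| monotone_filter_right _ fun i _ hi => hi.trans (h i)
  · intro h j
    exact le_antitoneSort_iff_lt_card.2 <|
      (le_antitoneSort_iff_lt_card.1 le_rfl).trans_le (h (antitoneSort x j))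

theorem stmt_3_general {x y y' : Fin n → α} {w : α} {i₀ : Fin n}
    (hdom : antitoneSort x ≤ antitoneSort y) (hwy : ∀ i, w ≤ y i) (hmax : ∀ i, x i ≤ x i₀)
    (hy' : y' = y ∨ ∃ (i : Fin n) (v : α), w ≤ v ∧ y' = update y i v) :
    antitoneSort (update x i₀ w) ≤ antitoneSort y' := by
  obtain ⟨k, v, hwv, rfl⟩ : ∃ (k : Fin n) (v : α), w ≤ v ∧ y' = update y k v :=
    hy'.elim (fun h => ⟨i₀, y i₀, hwy i₀, by rw [h, update_eq_self]⟩) id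
  exact antitoneSort_le_antitoneSort_iff.2 <|
    card_filter_le_update_le (antitoneSort_le_antitoneSort_iff.1 hdom) hwy hmax k hwv

end AntitoneSort

/-- Packet-delivery lemma (sufficiency form): sorted dominance is preserved when the
dominated vector has a maximal entry replaced by the common lower bound `w`, while the
dominating vector is unchanged or has one entry replaced by some `v ≥ w`. -/
theorem stmt_3 {n : ℕ} (x y : Fin n → ℝ) (w : ℝ)
    (hdom : ∀ j : Fin n, nthLargest x j ≤ nthLargest y j)
    (hwx : ∀ i, w ≤ x i) (hwy : ∀ i, w ≤ y i)
    (i₀ : Fin n) (hmax : ∀ i, x i ≤ x i₀)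
    (x' : Fin n → ℝ) (hx' : x' = Function.update x i₀ w)
    (y' : Fin n → ℝ)
    (hy' : y' = y ∨ ∃ (i : Fin n) (v : ℝ), w ≤ v ∧ y' = Function.update y i v) :
    ∀ j : Fin n, nthLargest x' j ≤ nthLargest y' j := by
  subst hx'
  exact stmt_3_general hdom hwy hmax hy'
end

section
/- Let x, y ∈ ℝ^n (with n ≥ 1) and w ∈ ℝ satisfy: x^{[j]} ≤ y^{[j]} for every j = 1,…,n, and w ≤ x_i for every i. Let x' be obtained from x by replacing one entry achieving the maximum of x with the value w. Let y' be obtained from y by replacing one entry of y whose value a satisfies a < max_i y_i with some value v with v ≥ w. Then there exists an index j ∈ {1,…,n} such that x'^{[j]} < y'^{[j]}. -/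
/-!
Compare sums of entries: a vector and its decreasing rearrangement have the same sum. Serving a
maximal entry of `x` leaves exactly `∑ j ≠ 0, nthLargest x j` besides `w`, whereas serving a
non-maximal entry of `y` leaves strictly more than `∑ j ≠ 0, nthLargest y j` besides `v ≥ w`.
Hence the updated `x` has the smaller sum, and some order statistic must witness this.
-/

section OrderStatistics

open Finset

variable {n : ℕ}

theorem sum_nthLargest (x : Fin n → ℝ) : ∑ j, nthLargest x j = ∑ i, x i :=
  Equiv.sum_comp (Fin.revPerm.trans (Tuple.sort x)) x

theorem exists_nthLargest_lt_of_sum_lt {x y : Fin n → ℝ} (h : ∑ i, x i < ∑ i, y i) :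
    ∃ j, nthLargest x j < nthLargest y j := by
  rw [← sum_nthLargest x, ← sum_nthLargest y] at h
  obtain ⟨j, -, hj⟩ := exists_lt_of_sum_lt h
  exact ⟨j, hj⟩

theorem antitone_nthLargest (x : Fin n → ℝ) : Antitone (nthLargest x) :=
  (Tuple.monotone_sort x).comp_antitone Fin.rev_anti

theorem exists_nthLargest_eq (x : Fin n → ℝ) (i : Fin n) : ∃ j, nthLargest x j = x i :=
  ⟨((Tuple.sort x).symm i).rev, by simp [nthLargest]⟩

variable [NeZero n]

theorem le_nthLargest_zero (x : Fin n → ℝ) (i : Fin n) : x i ≤ nthLargest x 0 := by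
  obtain ⟨j, hj⟩ := exists_nthLargest_eq x i
  exact hj ▸ antitone_nthLargest x (Fin.zero_le j)

theorem sum_update_eq_add_sum_nthLargest (x : Fin n → ℝ) (i : Fin n) (w : ℝ) :
    ∑ k, Function.update x i w k =
      w + ∑ j ∈ univ.erase 0, nthLargest x j + (nthLargest x 0 - x i) := by
  rw [sum_update_of_mem (mem_univ i), sdiff_singleton_eq_erase,
    sum_erase_eq_sub (mem_univ i), sum_erase_eq_sub (mem_univ 0), sum_nthLargest]
  ring

theorem stmt_4_general {x y : Fin n → ℝ} {w v : ℝ} {i₀ i₁ : Fin n}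
    (hdom : ∀ j ≠ 0, nthLargest x j ≤ nthLargest y j) (hmax : ∀ i, x i ≤ x i₀)
    (hlt : ∃ i, y i₁ < y i) (hv : w ≤ v) :
    ∃ j, nthLargest (Function.update x i₀ w) j < nthLargest (Function.update y i₁ v) j := by
  have hx : nthLargest x 0 ≤ x i₀ := hmax _
  have hy : y i₁ < nthLargest y 0 := by
    obtain ⟨i, hi⟩ := hlt
    exact hi.trans_le (le_nthLargest_zero y i)
  have htail : ∑ j ∈ univ.erase 0, nthLargest x j ≤ ∑ j ∈ univ.erase 0, nthLargest y j :=
    sum_le_sum fun j hj => hdom j (ne_of_mem_erase hj)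
  apply exists_nthLargest_lt_of_sum_lt
  rw [sum_update_eq_add_sum_nthLargest, sum_update_eq_add_sum_nthLargest]
  linarith

end OrderStatistics

/-- Necessity, Case 2: if the alternative policy serves a stream whose age is strictly
below the class maximum, then some order statistic becomes strictly smaller under the
proposed policy. -/
theorem stmt_4 {n : ℕ} (hn : 1 ≤ n) (x y : Fin n → ℝ) (w : ℝ)
    (hdom : ∀ j : Fin n, nthLargest x j ≤ nthLargest y j)
    (hwx : ∀ i, w ≤ x i)
    (i₀ : Fin n) (hmax : ∀ i, x i ≤ x i₀)
    (x' : Fin n → ℝ) (hx' : x' = Function.update x i₀ w)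
    (i₁ : Fin n) (hlt : ∃ i, y i₁ < y i)
    (v : ℝ) (hv : w ≤ v)
    (y' : Fin n → ℝ) (hy' : y' = Function.update y i₁ v) :
    ∃ j : Fin n, nthLargest x' j < nthLargest y' j := by
  have : NeZero n := ⟨Nat.one_le_iff_ne_zero.mp hn⟩
  subst hx' hy'
  exact stmt_4_general (fun j _ => hdom j) hmax hlt hv
end

section
/- Let y ∈ ℝ^n, let a be one entry of y, and let y' be obtained from y by replacing that entry of value a with an arbitrary real value v. Then for every j ∈ {1,…,n} such that y^{[j]} > a, we have y'^{[j]} ≥ y^{[j]}. -/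
/-! The entry of index `j` (from zero) in decreasing order is at least `t` exactly when more than
`j` entries are at least `t`. Take for `t` that entry of `y`: as `a < t`, a replaced entry of value
`a` is not among those counted, so replacing it cannot lower the count. -/

section OrderStatistics

open Finset

variable {n : ℕ} {α : Type*} [LinearOrder α]

theorem le_apply_sort_rev_iff_lt_card (f : Fin n → α) (j : Fin n) (t : α) :
    t ≤ f (Tuple.sort f j.rev) ↔ (j : ℕ) < #{i | t ≤ f i} := by
  have hanti : Antitone (f ∘ Tuple.sort f ∘ Fin.rev) :=
    (Tuple.monotone_sort f).comp_antitone Fin.rev_anti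
  have hcard : #{i | t ≤ (f ∘ Tuple.sort f ∘ Fin.rev) i} = #{i | t ≤ f i} :=
    card_equiv (Fin.revPerm.trans (Tuple.sort f)) (by simp)
  rw [← hcard]
  exact (Tuple.lt_card_ge_iff_apply_ge_of_antitone hanti).symm

theorem apply_sort_rev_le_apply_sort_rev {f g : Fin n → α} {j : Fin n}
    (h : ∀ i, f (Tuple.sort f j.rev) ≤ f i → f (Tuple.sort f j.rev) ≤ g i) :
    f (Tuple.sort f j.rev) ≤ g (Tuple.sort g j.rev) := by
  have hcount := (le_apply_sort_rev_iff_lt_card f j _).1 le_rfl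
  exact (le_apply_sort_rev_iff_lt_card g j _).2 <|
    hcount.trans_le <| card_le_card <| monotone_filter_right univ fun i _ ↦ h i

theorem stmt_8_general {y y' : Fin n → α} {a : α} (h : ∀ i, a < y i → y i ≤ y' i) (j : Fin n)
    (hj : a < y (Tuple.sort y j.rev)) :
    y (Tuple.sort y j.rev) ≤ y' (Tuple.sort y' j.rev) :=
  apply_sort_rev_le_apply_sort_rev fun i hi ↦ hi.trans (h i (hj.trans_le hi))

end OrderStatistics

/-- Replacing one entry of value `a` by an arbitrary value: every order statistic that was
strictly above `a` does not decrease. -/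
theorem stmt_8 {n : ℕ} (y : Fin n → ℝ) (i₀ : Fin n) (a : ℝ) (ha : y i₀ = a) (v : ℝ)
    (y' : Fin n → ℝ) (hy' : y' = Function.update y i₀ v) :
    ∀ j : Fin n, a < nthLargest y j → nthLargest y j ≤ nthLargest y' j := by
  refine stmt_8_general fun i hi ↦ ?_
  rw [hy', Function.update_of_ne (ne_of_apply_ne y (ha.trans_lt hi).ne')]
end
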